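/- Let 0 < m < M, let f : [m,M] → (0,∞) be continuous and convex, and either increasing or decreasing on [m,M]. Let A be a bounded self-adjoint operator on a complex Hilbert space H with mI ≤ A ≤ MI, and let φ : B(H) → B(K) be a normalized positive linear map. Then for any t₀ ∈ (m,M) at which f is differentiable with f′(t₀) ≠ 0, one has φ(f(A)) ≤ α(f,t₀) · f(φ(A)) + β(f,t₀)·I. -/

import Mathlib

/-!
A convex `f` lies below its chord `a t + b` on `[m, M]`, so `f(A) ≤ a A + b`, and the positivity and
unitality of `φ` give `φ(f(A)) ≤ a φ(A) + b`. Conversely `f` lies above its tangent at `t₀`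
(`tangent_le_of_convexOn`); since `f` is monotone or antitone, `a` and `f′(t₀)` have the same sign,
so `α = a / f′(t₀) ≥ 0` (`mpAlpha_nonneg`), and scaling the tangent inequality by `α` gives the
scalar inequality `a t + b ≤ α f(t) + β` (`chord_le_mpAlpha_mul_add`). As `φ(A)` also has its
spectrum in `[m, M]`, the functional calculus turns this into `a φ(A) + b ≤ α f(φ(A)) + β`.
-/

noncomputable def chordSlope (m M : ℝ) (f : ℝ → ℝ) : ℝ := (f M - f m) / (M - m)

noncomputable def chordIntercept (m M : ℝ) (f : ℝ → ℝ) : ℝ := (M * f m - m * f M) / (M - m)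

/-- `α(f,t₀) = a_f / f′(t₀)`. -/
noncomputable def mpAlpha (m M : ℝ) (f : ℝ → ℝ) (t₀ : ℝ) : ℝ :=
  chordSlope m M f / deriv f t₀

/-- `β(f,t₀) = a_f·t₀ + b_f − a_f·f(t₀)/f′(t₀)`. -/
noncomputable def mpBeta (m M : ℝ) (f : ℝ → ℝ) (t₀ : ℝ) : ℝ :=
  chordSlope m M f * t₀ + chordIntercept m M f - chordSlope m M f * f t₀ / deriv f t₀

theorem le_chord_of_convexOn {m M : ℝ} (hmM : m < M) {f : ℝ → ℝ}
    (hf : ConvexOn ℝ (Set.Icc m M) f) {t : ℝ} (ht : t ∈ Set.Icc m M) :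
    f t ≤ chordSlope m M f * t + chordIntercept m M f := by
  have h0 : 0 < M - m := sub_pos.2 hmM
  -- `t` is the convex combination of `m` and `M` with the weights below.
  have h := hf.2 (Set.left_mem_Icc.2 hmM.le) (Set.right_mem_Icc.2 hmM.le)
    (div_nonneg (sub_nonneg.2 ht.2) h0.le) (div_nonneg (sub_nonneg.2 ht.1) h0.le)
    (by field_simp; ring)
  simp only [smul_eq_mul] at h
  have e : (M - t) / (M - m) * m + (t - m) / (M - m) * M = t := by field_simp; ring
  rw [e] at h
  refine h.trans_eq ?_
  unfold chordSlope chordIntercept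
  field_simp
  ring

theorem tangent_le_of_convexOn {s : Set ℝ} {f : ℝ → ℝ} (hf : ConvexOn ℝ s f) {t₀ t : ℝ}
    (ht₀ : t₀ ∈ s) (ht : t ∈ s) (hdiff : DifferentiableAt ℝ f t₀) :
    f t₀ + deriv f t₀ * (t - t₀) ≤ f t := by
  rcases lt_trichotomy t t₀ with h | rfl | h
  · have := hf.slope_le_of_hasDerivAt ht ht₀ h hdiff.hasDerivAt
    rw [slope_def_field, div_le_iff₀ (sub_pos.2 h)] at this
    linarith
  · simp
  · have := hf.le_slope_of_hasDerivAt ht₀ ht h hdiff.hasDerivAt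
    rw [slope_def_field, le_div_iff₀ (sub_pos.2 h)] at this
    linarith

/-- The sign of `f′(t₀)` is read off by comparing `f` at an endpoint with the tangent at `t₀`. -/
theorem mpAlpha_nonneg {m M : ℝ} {f : ℝ → ℝ} (hf : ConvexOn ℝ (Set.Icc m M) f)
    (hf_mono : MonotoneOn f (Set.Icc m M) ∨ AntitoneOn f (Set.Icc m M))
    {t₀ : ℝ} (ht₀ : t₀ ∈ Set.Ioo m M) (hdiff : DifferentiableAt ℝ f t₀) :
    0 ≤ mpAlpha m M f t₀ := by
  have hmM : m < M := ht₀.1.trans ht₀.2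
  have hl := Set.left_mem_Icc.2 hmM.le
  have hr := Set.right_mem_Icc.2 hmM.le
  have ht := Set.Ioo_subset_Icc_self ht₀
  unfold mpAlpha chordSlope
  rcases hf_mono with h | h
  · have h1 := h hl ht ht₀.1.le
    have h2 := h hl hr hmM.le
    have h3 := tangent_le_of_convexOn hf ht hl hdiff
    have h4 : 0 ≤ deriv f t₀ := by
      by_contra! hc
      nlinarith [mul_pos_of_neg_of_neg hc (sub_neg.2 ht₀.1)]
    exact div_nonneg (div_nonneg (by linarith) (by linarith)) h4
  · have h1 := h ht hr ht₀.2.le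
    have h2 := h hl hr hmM.le
    have h3 := tangent_le_of_convexOn hf ht hr hdiff
    have h4 : deriv f t₀ ≤ 0 := by
      by_contra! hc
      nlinarith [mul_pos hc (sub_pos.2 ht₀.2)]
    exact div_nonneg_of_nonpos
      (div_nonpos_of_nonpos_of_nonneg (by linarith) (by linarith)) h4

theorem chord_le_mpAlpha_mul_add {m M : ℝ} {f : ℝ → ℝ} (hf : ConvexOn ℝ (Set.Icc m M) f)
    (hf_mono : MonotoneOn f (Set.Icc m M) ∨ AntitoneOn f (Set.Icc m M))
    {t₀ : ℝ} (ht₀ : t₀ ∈ Set.Ioo m M) (hdiff : DifferentiableAt ℝ f t₀)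
    (hderiv : deriv f t₀ ≠ 0) {t : ℝ} (ht : t ∈ Set.Icc m M) :
    chordSlope m M f * t + chordIntercept m M f ≤ mpAlpha m M f t₀ * f t + mpBeta m M f t₀ := by
  have h := mul_le_mul_of_nonneg_left
    (tangent_le_of_convexOn hf (Set.Ioo_subset_Icc_self ht₀) ht hdiff)
    (mpAlpha_nonneg hf hf_mono ht₀ hdiff)
  have e : mpAlpha m M f t₀ * (f t₀ + deriv f t₀ * (t - t₀)) =
      chordSlope m M f * f t₀ / deriv f t₀ + chordSlope m M f * (t - t₀) := by
    unfold mpAlpha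
    field_simp
  rw [e] at h
  unfold mpBeta
  linarith

theorem spectrum_subset_Icc_of_le {H : Type*} [NormedAddCommGroup H] [InnerProductSpace ℂ H]
    [CompleteSpace H] {m M : ℝ} {A : H →L[ℂ] H} (hA : IsSelfAdjoint A)
    (h₁ : m • (1 : H →L[ℂ] H) ≤ A) (h₂ : A ≤ M • (1 : H →L[ℂ] H)) :
    spectrum ℝ A ⊆ Set.Icc m M := by
  rw [← Algebra.algebraMap_eq_smul_one] at h₁ h₂
  exact fun x hx => ⟨(algebraMap_le_iff_le_spectrum (a := A)).1 h₁ x hx,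
    (le_algebraMap_iff_spectrum_le (a := A)).1 h₂ x hx⟩

theorem cfc_affine {H : Type*} [NormedAddCommGroup H] [InnerProductSpace ℂ H]
    [CompleteSpace H] {A : H →L[ℂ] H} (hA : IsSelfAdjoint A) (a b : ℝ) :
    cfc (fun t : ℝ => a * t + b) A = a • A + b • (1 : H →L[ℂ] H) := by
  rw [cfc_add A (fun t : ℝ => a * t) (fun _ => b), cfc_const_mul_id a A, cfc_const b A,
    Algebra.algebraMap_eq_smul_one]

theorem mond_pecaric_convex_map_side
    {H K : Type*} [NormedAddCommGroup H] [InnerProductSpace ℂ H] [CompleteSpace H]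
    [NormedAddCommGroup K] [InnerProductSpace ℂ K] [CompleteSpace K]
    (m M : ℝ) (hm : 0 < m) (hmM : m < M)
    (f : ℝ → ℝ) (hf_cont : ContinuousOn f (Set.Icc m M))
    (hf_pos : ∀ t ∈ Set.Icc m M, 0 < f t)
    (hf_conv : ConvexOn ℝ (Set.Icc m M) f)
    (hf_mono : MonotoneOn f (Set.Icc m M) ∨ AntitoneOn f (Set.Icc m M))
    (A : H →L[ℂ] H) (hA : IsSelfAdjoint A)
    (hA₁ : m • (1 : H →L[ℂ] H) ≤ A) (hA₂ : A ≤ M • (1 : H →L[ℂ] H))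
    (φ : (H →L[ℂ] H) →ₗ[ℂ] (K →L[ℂ] K))
    (hφ_pos : ∀ X : H →L[ℂ] H, 0 ≤ X → 0 ≤ φ X)
    (hφ_one : φ 1 = 1)
    (t₀ : ℝ) (ht₀ : t₀ ∈ Set.Ioo m M) (hdiff : DifferentiableAt ℝ f t₀)
    (hderiv : deriv f t₀ ≠ 0) :
    φ (cfc f A) ≤ mpAlpha m M f t₀ • cfc f (φ A) + mpBeta m M f t₀ • 1 := by
  have hφ_mono : ∀ X Y : H →L[ℂ] H, X ≤ Y → φ X ≤ φ Y := fun X Y h => by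
    have := hφ_pos _ (sub_nonneg.2 h)
    rwa [map_sub, sub_nonneg] at this
  have hφ_smul : ∀ (r : ℝ) (X : H →L[ℂ] H), φ (r • X) = r • φ X := fun r X => by
    rw [← Complex.coe_smul, map_smul, Complex.coe_smul]
  have hB₁ : m • (1 : K →L[ℂ] K) ≤ φ A := by
    simpa [hφ_smul, hφ_one] using hφ_mono _ _ hA₁
  have hB₂ : φ A ≤ M • (1 : K →L[ℂ] K) := by
    simpa [hφ_smul, hφ_one] using hφ_mono _ _ hA₂
  -- `φ A` is self-adjoint because it differs from a real multiple of `1` by a positive operator.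
  have hB : IsSelfAdjoint (φ A) := by
    have h := (IsSelfAdjoint.of_nonneg (sub_nonneg.2 hB₁)).add
      ((IsSelfAdjoint.all m).smul (IsSelfAdjoint.one (K →L[ℂ] K)))
    rwa [sub_add_cancel] at h
  have hsA := spectrum_subset_Icc_of_le hA hA₁ hA₂
  have hsB := spectrum_subset_Icc_of_le hB hB₁ hB₂
  have hcA : ContinuousOn f (spectrum ℝ A) := hf_cont.mono hsA
  have hcB : ContinuousOn f (spectrum ℝ (φ A)) := hf_cont.mono hsB
  have h1 : cfc f A ≤ chordSlope m M f • A + chordIntercept m M f • (1 : H →L[ℂ] H) := by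
    rw [← cfc_affine hA]
    exact cfc_mono (fun t ht => le_chord_of_convexOn hmM hf_conv (hsA ht)) hcA (by fun_prop)
  have h2 : φ (cfc f A) ≤
      chordSlope m M f • φ A + chordIntercept m M f • (1 : K →L[ℂ] K) := by
    simpa [hφ_smul, hφ_one] using hφ_mono _ _ h1
  refine h2.trans ?_
  have e : cfc (fun t => mpAlpha m M f t₀ * f t + mpBeta m M f t₀) (φ A) =
      mpAlpha m M f t₀ • cfc f (φ A) + mpBeta m M f t₀ • (1 : K →L[ℂ] K) := by
    rw [cfc_add (φ A) (fun t => mpAlpha m M f t₀ * f t) (fun _ => mpBeta m M f t₀)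
      (hcB.const_mul _) (by fun_prop), cfc_const_mul _ f (φ A) hcB, cfc_const _ (φ A),
      Algebra.algebraMap_eq_smul_one]
  rw [← cfc_affine hB, ← e]
  exact cfc_mono
    (fun t ht => chord_le_mpAlpha_mul_add hf_conv hf_mono ht₀ hdiff hderiv (hsB ht))
    (by fun_prop) ((hcB.const_mul _).add continuousOn_const)
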